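/- The weight function w₃(λ,x) = 1 − e^{−x/λ} is strictly totally positive of order infinity on (0,∞)²: for every r ≥ 1 and all λ₁ > λ₂ > ⋯ > λ_r > 0 and x₁ > x₂ > ⋯ > x_r > 0, the r×r determinant det( (1 − e^{−x_j/λ_i})_{i,j=1}^r ) is strictly positive. -/

import Mathlib

/-!
Dividing an exponential sum with `n + 1` terms by one of its exponentials and differentiating leaves
`n` terms, so by Rolle's theorem a nonzero such sum has at most `n` real zeros. Hence
`det (exp (aᵢ yⱼ))` does not vanish when `a` and `y` are strictly increasing. For fixed `a` the
admissible `y` form a convex set, so the determinant has constant sign there, and at `y = (0, 1, …)`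
it is a positive Vandermonde determinant. Finally, with `aᵢ = 1 / λᵢ` and `yⱼ = -xⱼ`, adjoining the
exponent `0` below the `aᵢ` and the point `0` above the `yⱼ` borders the kernel by ones, and
clearing this border turns `exp (aᵢ yⱼ)` into `1 - exp (aᵢ yⱼ)`.
-/

open Set

/-- The kernel `K` is strictly totally positive (of infinite order) on `s × t`: all of its minors
with increasing row parameters in `s` and increasing column parameters in `t` are positive. -/
def StrictlyTotallyPositiveOn {α β R : Type*} [Preorder α] [Preorder β] [CommRing R]
    [PartialOrder R] (K : α → β → R) (s : Set α) (t : Set β) : Prop :=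
  ∀ ⦃n : ℕ⦄ ⦃a : Fin n → α⦄ ⦃b : Fin n → β⦄, StrictMono a → (∀ i, a i ∈ s) →
    StrictMono b → (∀ j, b j ∈ t) → 0 < (Matrix.of fun i j => K (a i) (b j)).det

theorem det_eq_det_one_sub_of_border_one {R : Type*} [CommRing R] {n : ℕ}
    {M : Matrix (Fin (n + 1)) (Fin (n + 1)) R} (hrow : ∀ j, M 0 j = 1)
    (hcol : ∀ i, M i (Fin.last n) = 1) :
    M.det = (Matrix.of fun i j : Fin n => 1 - M i.succ j.castSucc).det := by
  -- Subtracting row `0` from the others clears the last column below its top entry; the sign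
  -- `(-1) ^ n` of the remaining cofactor is absorbed by negating its `n` rows.
  let B : Matrix (Fin (n + 1)) (Fin (n + 1)) R :=
    Matrix.of fun i j => M i j - if i = 0 then 0 else 1
  have det_M : M.det = B.det :=
    Matrix.det_eq_of_forall_row_eq_smul_add_const (fun i => if i = 0 then 0 else 1) 0 (by simp)
      fun i j => by simp [B, hrow]
  have B_zero_last : B 0 (Fin.last n) = 1 := by simp [B, hcol]
  have B_succ_last : ∀ i : Fin n, B i.succ (Fin.last n) = 0 := by simp [B, hcol]
  have B_minor : B.submatrix (Fin.succAbove 0) (Fin.last n).succAbove =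
      -Matrix.of fun i j : Fin n => 1 - M i.succ j.castSucc := by
    ext i j
    simp [B]
  rw [det_M, Matrix.det_succ_column B (Fin.last n), Fin.sum_univ_succ]
  simp only [B_zero_last, B_succ_last, B_minor, Matrix.det_neg]
  simp [← mul_assoc, ← mul_pow]

theorem strictMono_snoc_iff {α : Type*} [Preorder α] {n : ℕ} {f : Fin n → α} {x : α} :
    StrictMono (Fin.snoc f x : Fin (n + 1) → α) ↔ StrictMono f ∧ ∀ i, f i < x := by
  rw [← Fin.insertNth_last', Fin.strictMono_insertNth_iff]
  simp [Fin.castSucc_lt_last, Fin.last_le_iff]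

theorem StrictlyTotallyPositiveOn.one_sub {α β R : Type*} [Preorder α] [Preorder β] [CommRing R]
    [PartialOrder R] {K : α → β → R} {a₀ : α} {b₀ : β}
    (hK : StrictlyTotallyPositiveOn K (Ici a₀) (Iic b₀)) (hrow : ∀ b ≤ b₀, K a₀ b = 1)
    (hcol : ∀ a, a₀ ≤ a → K a b₀ = 1) :
    StrictlyTotallyPositiveOn (fun a b => 1 - K a b) (Ioi a₀) (Iio b₀) := by
  intro n a b ha ha_mem hb hb_mem
  let a' : Fin (n + 1) → α := Fin.cons a₀ a
  let b' : Fin (n + 1) → β := Fin.snoc b b₀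
  have ha' : StrictMono a' := Fin.strictMono_cons.2 ⟨ha_mem, ha⟩
  have hb' : StrictMono b' := strictMono_snoc_iff.2 ⟨hb, hb_mem⟩
  have ha'_mem : ∀ i, a₀ ≤ a' i := Fin.cases le_rfl fun i => (ha_mem i).le
  have hb'_mem : ∀ j, b' j ≤ b₀ :=
    Fin.lastCases (by simp [b']) fun j => by simpa [b'] using (hb_mem j).le
  have hdet := det_eq_det_one_sub_of_border_one
    (M := Matrix.of fun i j => K (a' i) (b' j)) (fun j => hrow _ (hb'_mem j))
    (fun i => by simpa [b'] using hcol _ (ha'_mem i))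
  simpa [hdet, a', b'] using hK ha' ha'_mem hb' hb'_mem

theorem exists_strictMono_deriv_eq_zero {n : ℕ} {f : ℝ → ℝ} {y : ℝ} {z : Fin (n + 1) → ℝ}
    (hf : Continuous f) (hz : StrictMono z) (hfz : ∀ j, f (z j) = y) :
    ∃ w : Fin n → ℝ, StrictMono w ∧ ∀ j, deriv f (w j) = 0 := by
  have rolle (j : Fin n) : ∃ w ∈ Ioo (z j.castSucc) (z j.succ), deriv f w = 0 :=
    exists_deriv_eq_zero (hz j.castSucc_lt_succ) hf.continuousOn (by rw [hfz, hfz])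
  choose w hw_mem hw using rolle
  refine ⟨w, fun i j hij => ?_, hw⟩
  calc
    w i < z i.succ := (hw_mem i).2
    _ ≤ z j.castSucc := hz.monotone (Fin.succ_le_castSucc_iff.2 hij)
    _ < w j := (hw_mem j).1

section ExponentialSums

variable {ι : Type*} [Fintype ι]

/-- The real exponential sum with coefficients `c` and exponents `a`, as a function of `t`. -/
noncomputable def expSum (c a : ι → ℝ) (t : ℝ) : ℝ :=
  ∑ i, c i * Real.exp (a i * t)

theorem expSum_sub_const (c a : ι → ℝ) (s t : ℝ) :
    expSum c (fun i => a i - s) t = Real.exp (-(s * t)) * expSum c a t := by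
  have exp_sub_mul (i : ι) :
      Real.exp ((a i - s) * t) = Real.exp (-(s * t)) * Real.exp (a i * t) := by
    rw [← Real.exp_add]
    ring_nf
  simp only [expSum, Finset.mul_sum, exp_sub_mul, mul_left_comm]

theorem hasDerivAt_expSum (c a : ι → ℝ) (t : ℝ) :
    HasDerivAt (expSum c a) (expSum (fun i => c i * a i) a t) t := by
  have hterm (i : ι) : HasDerivAt (fun t => c i * Real.exp (a i * t))
      (c i * a i * Real.exp (a i * t)) t :=
    ((hasDerivAt_const_mul (a i)).exp.const_mul (c i)).congr_deriv (by ring)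
  exact HasDerivAt.fun_sum fun i _ => hterm i

theorem eq_zero_of_expSum_eq_zero {n : ℕ} {c a z : Fin n → ℝ} (ha : Function.Injective a)
    (hz : StrictMono z) (h : ∀ j, expSum c a (z j) = 0) : c = 0 := by
  induction n with
  | zero => exact Subsingleton.elim _ _
  | succ n ih =>
    let d : Fin (n + 1) → ℝ := fun i => a i - a 0
    have hd (j) : expSum c d (z j) = 0 := by rw [expSum_sub_const, h, mul_zero]
    obtain ⟨w, hw, hw_zero⟩ := exists_strictMono_deriv_eq_zero
      (continuous_iff_continuousAt.2 fun t => (hasDerivAt_expSum c d t).continuousAt) hz hd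
    have hderiv (j) :
        expSum (fun i : Fin n => c i.succ * d i.succ) (fun i => d i.succ) (w j) = 0 := by
      simpa [(hasDerivAt_expSum c d _).deriv, expSum, Fin.sum_univ_succ, d] using hw_zero j
    have hd_inj : Function.Injective fun i : Fin n => d i.succ :=
      (sub_left_injective.comp ha).comp (Fin.succ_injective n)
    have hsucc (i : Fin n) : c i.succ = 0 := by
      have hd_ne : d i.succ ≠ 0 := sub_ne_zero.2 (ha.ne i.succ_ne_zero)
      exact (mul_eq_zero.1 (congrFun (ih hd_inj hw hderiv) i)).resolve_right hd_ne
    have hzero : c 0 = 0 := by simpa [expSum, Fin.sum_univ_succ, hsucc, d] using hd 0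
    exact funext (Fin.cases hzero hsucc)

end ExponentialSums

theorem convex_setOf_strictMono {𝕜 ι β : Type*} [Semiring 𝕜] [PartialOrder 𝕜] [Preorder ι]
    [AddCommMonoid β] [PartialOrder β] [IsOrderedCancelAddMonoid β] [Module 𝕜 β]
    [PosSMulStrictMono 𝕜 β] : Convex 𝕜 {f : ι → β | StrictMono f} := by
  intro f hf g hg a b ha hb hab i j hij
  obtain rfl | ha_pos := ha.eq_or_lt
  · obtain rfl : b = 1 := by simpa using hab
    simpa using hg hij
  · exact add_lt_add_of_lt_of_le (smul_lt_smul_of_pos_left (hf hij) ha_pos)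
      (smul_le_smul_of_nonneg_left (hg hij).le hb)

section ExponentialKernel

variable {n : ℕ} {a y : Fin n → ℝ}

theorem det_exp_mul_ne_zero (ha : Function.Injective a) (hy : StrictMono y) :
    (Matrix.of fun i j => Real.exp (a i * y j)).det ≠ 0 := by
  intro hdet
  obtain ⟨c, hc, hc_mul⟩ := Matrix.exists_vecMul_eq_zero_iff.2 hdet
  exact hc (eq_zero_of_expSum_eq_zero ha hy (congrFun hc_mul))

theorem det_exp_mul_natCast_pos (ha : StrictMono a) :
    0 < (Matrix.of fun i j : Fin n => Real.exp (a i * (j : ℕ))).det := by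
  have vandermonde : (Matrix.of fun i j : Fin n => Real.exp (a i * (j : ℕ))) =
      Matrix.vandermonde fun i => Real.exp (a i) := by
    ext i j
    simp [Matrix.vandermonde_apply, mul_comm (a i), Real.exp_nat_mul]
  rw [vandermonde, Matrix.det_vandermonde]
  exact Finset.prod_pos fun i _ => Finset.prod_pos fun j hij =>
    sub_pos.2 (Real.exp_lt_exp.2 (ha (Finset.mem_Ioi.1 hij)))

theorem det_exp_mul_pos (ha : StrictMono a) (hy : StrictMono y) :
    0 < (Matrix.of fun i j => Real.exp (a i * y j)).det := by
  let D : (Fin n → ℝ) → ℝ := fun y => (Matrix.of fun i j => Real.exp (a i * y j)).det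
  have hD : Continuous D := by fun_prop
  have hnat : StrictMono fun j : Fin n => ((j : ℕ) : ℝ) :=
    Nat.strictMono_cast.comp Fin.val_strictMono
  by_contra! hneg
  obtain ⟨u, hu, hDu⟩ := (convex_setOf_strictMono (𝕜 := ℝ)).isPreconnected.intermediate_value
    hy hnat hD.continuousOn ⟨hneg, (det_exp_mul_natCast_pos ha).le⟩
  exact det_exp_mul_ne_zero ha.injective hu hDu

theorem strictlyTotallyPositiveOn_exp_mul (s t : Set ℝ) :
    StrictlyTotallyPositiveOn (fun a y : ℝ => Real.exp (a * y)) s t :=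
  fun _ _ _ ha _ hy _ => det_exp_mul_pos ha hy

theorem strictlyTotallyPositiveOn_one_sub_exp_mul :
    StrictlyTotallyPositiveOn (fun a y : ℝ => 1 - Real.exp (a * y)) (Ioi 0) (Iio 0) :=
  (strictlyTotallyPositiveOn_exp_mul (Ici 0) (Iic 0)).one_sub (by simp) (by simp)

end ExponentialKernel

/-- The Kamps weight function `w₃(λ,x) = 1 − e^{−x/λ}` is strictly
totally positive of order infinity on `(0,∞)²`. -/
theorem stmt_12 :
    ∀ r : ℕ, 1 ≤ r → ∀ lam x : Fin r → ℝ,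
      (∀ i : Fin r, 0 < lam i) → (∀ j : Fin r, 0 < x j) →
      (∀ i j : Fin r, i < j → lam j < lam i) →
      (∀ i j : Fin r, i < j → x j < x i) →
      0 < Matrix.det (Matrix.of fun i j : Fin r =>
        1 - Real.exp (-(x j) / lam i)) := by
  intro r _ lam x hlam_pos hx_pos hlam hx
  have hinv : StrictMono fun i => (lam i)⁻¹ :=
    fun i j hij => inv_strictAnti₀ (hlam_pos j) (hlam i j hij)
  have hneg : StrictMono fun j => -x j := fun i j hij => neg_lt_neg (hx i j hij)
  simpa only [div_eq_inv_mul] using strictlyTotallyPositiveOn_one_sub_exp_mul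
    hinv (fun i => inv_pos.2 (hlam_pos i)) hneg (fun j => neg_neg_of_pos (hx_pos j))
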